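/- Let N ≥ d ≥ 1, let s : ℤ/dℤ → ℤ/Nℤ be injective, let {x_k}_{k ∈ ℤ/Nℤ} be the associated DFT frame for ℂ^d, and let F be the associated vector-valued DFT. Then F is invertible if and only if gcd(s(n), N) = 1 for every n ∈ ℤ/dℤ. In that case the inverse is given by u(m) = (1/N) ∑_{p=0}^{N-1} û(p) ⊙ x_{mp} for all m ∈ ℤ/Nℤ, and moreover F*F = FF* = N·I, where F* is the adjoint of F with respect to the ℓ² inner product and I is the identity operator. -/

import Mathlib

/-- The DFT frame vector `x_m = (e^{2πi m s(0)/N}, …, e^{2πi m s(d-1)/N}) ∈ ℂ^d`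
associated with an injective map `s : ℤ/dℤ → ℤ/Nℤ`, viewed as a function `ℤ/dℤ → ℂ`. -/
noncomputable def dftVec (N d : ℕ) (s : ZMod d → ZMod N) (m : ZMod N) : ZMod d → ℂ :=
  fun p => Complex.exp (2 * Real.pi * Complex.I * (m.val : ℂ) * ((s p).val : ℂ) / (N : ℂ))

/-- The vector-valued DFT: `F(u)(n) = ∑_{m} u(m) ⊙ x_{-mn}`, where `⊙` is the
coordinatewise product of vectors in `ℂ^d`. -/
noncomputable def vvDFT (N d : ℕ) [NeZero N] (s : ZMod d → ZMod N)
    (u : ZMod N → ZMod d → ℂ) : ZMod N → ZMod d → ℂ :=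
  fun n => ∑ m : ZMod N, u m * dftVec N d s (-(m * n))

/-- The `ℓ²` inner product `⟨u, v⟩ = ∑_m ∑_p u(m)(p) conj(v(m)(p))` on
`ℓ²(ℤ/Nℤ × ℤ/dℤ)`, the space of functions `ℤ/Nℤ → ℂ^d`. -/
noncomputable def l2Inner (N d : ℕ) [NeZero N] [NeZero d]
    (u v : ZMod N → ZMod d → ℂ) : ℂ :=
  ∑ m : ZMod N, ∑ p : ZMod d, u m p * (starRingEnd ℂ) (v m p)

open ZMod in
theorem dftVec_apply (N d : ℕ) [NeZero N] (s : ZMod d → ZMod N) (m : ZMod N) (p : ZMod d) :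
    dftVec N d s m p = stdAddChar (m * s p) := by
  have h : m * s p = (((m.val * (s p).val : ℕ) : ℤ) : ZMod N) := by simp
  rw [h, stdAddChar_coe, dftVec]
  push_cast
  ring_nf

/-- The (unnormalized) inverse vector-valued DFT, `v ↦ (m ↦ ∑_n v(n) ⊙ x_{mn})`. -/
noncomputable def vvDFTAdjoint (N d : ℕ) [NeZero N] (s : ZMod d → ZMod N)
    (v : ZMod N → ZMod d → ℂ) : ZMod N → ZMod d → ℂ :=
  fun m => ∑ n : ZMod N, v n * dftVec N d s (m * n)

theorem vvDFT_apply (N d : ℕ) [NeZero N] (s : ZMod d → ZMod N)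
    (u : ZMod N → ZMod d → ℂ) (n : ZMod N) (p : ZMod d) :
    vvDFT N d s u n p = ∑ m, u m p * ZMod.stdAddChar (-(m * n) * s p) := by
  simp [vvDFT, dftVec_apply]

theorem vvDFTAdjoint_apply (N d : ℕ) [NeZero N] (s : ZMod d → ZMod N)
    (v : ZMod N → ZMod d → ℂ) (m : ZMod N) (p : ZMod d) :
    vvDFTAdjoint N d s v m p = ∑ n, v n p * ZMod.stdAddChar (m * n * s p) := by
  simp [vvDFTAdjoint, dftVec_apply]

/-- Orthogonality of the characters `n ↦ e^{2πi n k a / N}` for a unit `a`. -/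
theorem ZMod.sum_stdAddChar_mul_sub_mul {N : ℕ} [NeZero N] {a : ZMod N} (ha : IsUnit a)
    (k m : ZMod N) :
    ∑ n, stdAddChar (n * ((m - k) * a)) = if k = m then (N : ℂ) else 0 := by
  rw [AddChar.sum_mulShift _ (isPrimitive_stdAddChar N)]
  simp [ha.mul_left_eq_zero, sub_eq_zero, eq_comm, ZMod.card]

theorem vvDFTAdjoint_vvDFT {N d : ℕ} [NeZero N] {s : ZMod d → ZMod N}
    (hs : ∀ p, IsUnit (s p)) (u : ZMod N → ZMod d → ℂ) :
    vvDFTAdjoint N d s (vvDFT N d s u) = (N : ℂ) • u := by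
  funext m p
  simp_rw [vvDFTAdjoint_apply, vvDFT_apply, Finset.sum_mul]
  rw [Finset.sum_comm]
  have h (k n : ZMod N) : u k p * ZMod.stdAddChar (-(k * n) * s p) *
      ZMod.stdAddChar (m * n * s p) = u k p * ZMod.stdAddChar (n * ((m - k) * s p)) := by
    rw [mul_assoc, ← AddChar.map_add_eq_mul]
    ring_nf
  simp_rw [h, ← Finset.mul_sum, ZMod.sum_stdAddChar_mul_sub_mul (hs p)]
  simp [mul_comm]

theorem vvDFT_vvDFTAdjoint {N d : ℕ} [NeZero N] {s : ZMod d → ZMod N}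
    (hs : ∀ p, IsUnit (s p)) (v : ZMod N → ZMod d → ℂ) :
    vvDFT N d s (vvDFTAdjoint N d s v) = (N : ℂ) • v := by
  funext n p
  simp_rw [vvDFT_apply, vvDFTAdjoint_apply, Finset.sum_mul]
  rw [Finset.sum_comm]
  have h (k m : ZMod N) : v k p * ZMod.stdAddChar (m * k * s p) *
      ZMod.stdAddChar (-(m * n) * s p) = v k p * ZMod.stdAddChar (m * ((k - n) * s p)) := by
    rw [mul_assoc, ← AddChar.map_add_eq_mul]
    ring_nf
  simp_rw [h, ← Finset.mul_sum, ZMod.sum_stdAddChar_mul_sub_mul (hs p)]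
  simp [mul_comm]

theorem l2Inner_vvDFT (N d : ℕ) [NeZero N] [NeZero d] (s : ZMod d → ZMod N)
    (u v : ZMod N → ZMod d → ℂ) :
    l2Inner N d (vvDFT N d s u) v = l2Inner N d u (vvDFTAdjoint N d s v) := by
  simp_rw [l2Inner, vvDFT_apply, vvDFTAdjoint_apply, map_sum, Finset.sum_mul, Finset.mul_sum]
  rw [Finset.sum_comm, Finset.sum_comm (γ := ZMod N) (α := ZMod d)]
  refine Finset.sum_congr rfl fun p _ => ?_
  rw [Finset.sum_comm]
  refine Finset.sum_congr rfl fun m _ => Finset.sum_congr rfl fun n _ => ?_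
  rw [map_mul (starRingEnd ℂ), ← AddChar.map_neg_eq_conj, neg_mul]
  ring

theorem isUnit_of_injective_vvDFT {N d : ℕ} [NeZero N] {s : ZMod d → ZMod N}
    (h : Function.Injective (vvDFT N d s)) (p : ZMod d) : IsUnit (s p) := by
  have hinj : Function.Injective (· * s p) := by
    intro a b (hab : a * s p = b * s p)
    have hF : vvDFT N d s (Pi.single a (Pi.single p 1)) =
        vvDFT N d s (Pi.single b (Pi.single p 1)) := by
      have hsingle (c n : ZMod N) (q : ZMod d) :
          vvDFT N d s (Pi.single c (Pi.single p 1)) n q =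
            (Pi.single p 1 : ZMod d → ℂ) q * ZMod.stdAddChar (-(c * n) * s q) := by
        rw [vvDFT_apply, Finset.sum_eq_single c] <;> simp +contextual
      funext n q
      rw [hsingle, hsingle]
      obtain rfl | hq := eq_or_ne q p
      · rw [show -(a * n) * s q = -n * (a * s q) by ring, hab]
        ring_nf
      · simp [hq]
    by_contra hne
    have := congrFun (congrFun (h hF) a) p
    simp [hne] at this
  obtain ⟨b, hb⟩ := Finite.surjective_of_injective hinj 1
  exact .of_mul_eq_one_right b hb

theorem bijective_vvDFT {N d : ℕ} [NeZero N] {s : ZMod d → ZMod N}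
    (hs : ∀ p, IsUnit (s p)) : Function.Bijective (vvDFT N d s) := by
  have hN : (N : ℂ) ≠ 0 := NeZero.ne _
  constructor
  · intro u v huv
    have := congrArg (vvDFTAdjoint N d s) huv
    rw [vvDFTAdjoint_vvDFT hs, vvDFTAdjoint_vvDFT hs] at this
    exact smul_right_injective _ hN this
  · intro v
    refine ⟨vvDFTAdjoint N d s ((N : ℂ)⁻¹ • v), ?_⟩
    rw [vvDFT_vvDFTAdjoint hs, smul_inv_smul₀ hN]

/-- For `N ≥ d ≥ 1` and injective `s : ℤ/dℤ → ℤ/Nℤ`, the vector-valued DFT `F`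
associated with the DFT frame `{x_k}` is invertible iff `gcd(s(n), N) = 1` for all `n`;
in that case `u(m) = (1/N) ∑_p û(p) ⊙ x_{mp}`, and `F*F = FF* = N·I` where `F*` is the
adjoint of `F` with respect to the `ℓ²` inner product. -/
theorem stmt_3 (N d : ℕ) [NeZero N] [NeZero d] (hdN : d ≤ N)
    (s : ZMod d → ZMod N) (hs : Function.Injective s) :
    (Function.Bijective (vvDFT N d s) ↔ ∀ n : ZMod d, Nat.Coprime ((s n).val) N) ∧
    ((∀ n : ZMod d, Nat.Coprime ((s n).val) N) →
      (∀ (u : ZMod N → ZMod d → ℂ) (m : ZMod N),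
        u m = (N : ℂ)⁻¹ • ∑ p : ZMod N, vvDFT N d s u p * dftVec N d s (m * p)) ∧
      ∃ Fstar : (ZMod N → ZMod d → ℂ) → (ZMod N → ZMod d → ℂ),
        (∀ u v, l2Inner N d (vvDFT N d s u) v = l2Inner N d u (Fstar v)) ∧
        (∀ u, Fstar (vvDFT N d s u) = (N : ℂ) • u) ∧
        (∀ u, vvDFT N d s (Fstar u) = (N : ℂ) • u)) := by
  have hunit (n : ZMod d) : Nat.Coprime (s n).val N ↔ IsUnit (s n) := by
    rw [← ZMod.isUnit_iff_coprime, ZMod.natCast_zmod_val]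
  simp_rw [hunit]
  refine ⟨⟨fun h => isUnit_of_injective_vvDFT h.injective, bijective_vvDFT⟩, fun h =>
    ⟨fun u m => ?_, vvDFTAdjoint N d s, l2Inner_vvDFT N d s, vvDFTAdjoint_vvDFT h,
      vvDFT_vvDFTAdjoint h⟩⟩
  change u m = (N : ℂ)⁻¹ • vvDFTAdjoint N d s (vvDFT N d s u) m
  rw [vvDFTAdjoint_vvDFT h, Pi.smul_apply, inv_smul_smul₀ (NeZero.ne _)]
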